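/- arXiv:2505.18967 — 3 statements merged into one kernel-verified Lean document; each statement's English description precedes it below -/
import Mathlib

section
/- Let p be an odd prime, let m ∈ ℤ with p ∤ m, and let s ∈ ℂ with Re s > 0. Then the double series Σ_{u≥0} Σ_{v≥0} Kl_p(u,v;m) · p^{−u(s+1)} · p^{−v(2s+1)} converges absolutely, and its sum equals (1 − p^{−(s+1)})/(1 − p^{−2s}). -/
/-- The local generalized Kloosterman sum
`Kl_p(u,v;m) = Σ_{a mod p^{u+2v}, p^{2v} ∣ a²−4m} ((a²−4m)/p^{2v} | p^u)`,
where `(· | ·)` is the Jacobi symbol. -/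
noncomputable def Klp (p u v : ℕ) (m : ℤ) : ℤ :=
  ∑ a ∈ Finset.range (p ^ (u + 2*v)),
    if ((p:ℤ) ^ (2*v) ∣ ((a:ℤ)^2 - 4*m)) then
      jacobiSym (((a:ℤ)^2 - 4*m) / (p:ℤ) ^ (2*v)) (p ^ u)
    else 0

open Finset in
lemma sum_range_mul_aux (f : ℕ → ℤ) (K M : ℕ) :
    ∑ a ∈ range (K * M), f a = ∑ t ∈ range M, ∑ b ∈ range K, f (K * t + b) := by
  induction M with
  | zero => simp
  | succ M ih => rw [Nat.mul_succ, sum_range_add, ih, sum_range_succ]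

open Finset in
lemma sum_range_zmod (p : ℕ) [Fact p.Prime] (G : ZMod p → ℤ) :
    ∑ b ∈ range p, G (b : ZMod p) = ∑ x : ZMod p, G x := by
  refine sum_bij' (fun b _ => (b : ZMod p)) (fun x _ => x.val) ?_ ?_ ?_ ?_ ?_
  · intros; simp
  · intro x _; simpa using ZMod.val_lt x
  · intro b hb; exact ZMod.val_cast_of_lt (by simpa using hb)
  · intro x _; simp
  · intros; rfl

open Finset in
lemma sum_range_pow_zmod (p : ℕ) [Fact p.Prime] (G : ZMod p → ℤ) (n : ℕ) :
    ∑ b ∈ range (p ^ (n + 1)), G (b : ZMod p) = (p : ℤ) ^ n * ∑ x : ZMod p, G x := by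
  rw [pow_succ', sum_range_mul_aux]
  simp [sum_range_zmod]

/-- number of roots modulo `p ^ k` -/
noncomputable def rootN (p k : ℕ) (m : ℤ) : ℤ :=
  ∑ a ∈ Finset.range (p ^ k), if ((p:ℤ) ^ k ∣ ((a:ℤ)^2 - 4*m)) then 1 else 0

lemma four_ne (p : ℕ) [hp : Fact p.Prime] (hp2 : p ≠ 2) : (2 : ZMod p) ≠ 0 := by
  intro h
  have : ((2 : ℕ) : ZMod p) = 0 := by exact_mod_cast h
  rw [ZMod.natCast_eq_zero_iff] at this
  exact hp2 ((Nat.prime_dvd_prime_iff_eq hp.out Nat.prime_two).1 this)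

open Finset in
lemma key_fiber (p : ℕ) [hp : Fact p.Prime] (hp2 : p ≠ 2) (m : ℤ) (hm : ¬ (p:ℤ) ∣ m)
    (F : ZMod p → ℤ) (k n : ℕ) :
    ∑ a ∈ range (p ^ (n + 1 + (k + 1))),
      (if ((p:ℤ) ^ (k + 1) ∣ ((a:ℤ)^2 - 4*m)) then
        F (((((a:ℤ)^2 - 4*m) / (p:ℤ) ^ (k + 1) : ℤ)) : ZMod p) else 0)
      = rootN p (k + 1) m * ((p : ℤ) ^ n * ∑ x : ZMod p, F x) := by
  have hp0 : (p : ℤ) ≠ 0 := by exact_mod_cast hp.out.ne_zero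
  rw [add_comm (n + 1), pow_add, sum_range_mul_aux, sum_comm, rootN, sum_mul]
  refine sum_congr rfl fun b _ => ?_
  have hdv : ∀ t : ℕ, (p:ℤ) ^ (k + 1) ∣ (((p ^ (k+1) * t + b : ℕ):ℤ)^2 - 4*m) ↔
      (p:ℤ) ^ (k + 1) ∣ ((b:ℤ)^2 - 4*m) := by
    intro t
    have : (((p ^ (k+1) * t + b : ℕ):ℤ)^2 - 4*m) = (p:ℤ)^(k+1) * (2 * b * t + p^(k+1) * t^2)
        + ((b:ℤ)^2 - 4*m) := by push_cast; ring
    rw [this]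
    exact (Int.dvd_add_right (dvd_mul_right _ _))
  simp only [hdv]
  split_ifs with h
  · obtain ⟨c, hc⟩ := h
    have hb : (b : ZMod p) ≠ 0 := by
      intro hb
      rw [ZMod.natCast_eq_zero_iff] at hb
      have h1 : (p:ℤ) ∣ (b:ℤ) := by exact_mod_cast hb
      have h2 : (p:ℤ) ∣ 4 * m := by
        have : 4 * m = b * b - p * (p^k * c) := by linear_combination -hc
        rw [this]
        exact dvd_sub (h1.mul_right _) (dvd_mul_right _ _)
      rcases (Nat.prime_iff_prime_int.1 hp.out).dvd_or_dvd h2 with h3 | h3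
      · have h4 : p ∣ 2 * 2 := by exact_mod_cast h3
        rcases hp.out.dvd_or_dvd h4 with h5 | h5 <;>
        exact hp2 ((Nat.prime_dvd_prime_iff_eq hp.out Nat.prime_two).1 h5)
      · exact hm h3
    have hq : ∀ t : ℕ, (((((p ^ (k+1) * t + b : ℕ):ℤ)^2 - 4*m) / (p:ℤ)^(k+1) : ℤ) : ZMod p)
        = (c : ZMod p) + 2 * b * t := by
      intro t
      have : (((p ^ (k+1) * t + b : ℕ):ℤ)^2 - 4*m) =
          (p:ℤ)^(k+1) * (c + 2 * b * t + p^(k+1) * t^2) := by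
        push_cast; linear_combination hc
      rw [this, Int.mul_ediv_cancel_left _ (pow_ne_zero _ hp0)]
      push_cast
      simp
    simp only [hq]
    rw [sum_range_pow_zmod p (fun x => F ((c : ZMod p) + 2 * b * x)), one_mul]
    congr 1
    have h2b : (2 * b : ZMod p) ≠ 0 := mul_ne_zero (four_ne p hp2) hb
    exact ((Equiv.mulLeft₀ _ h2b).trans (Equiv.addLeft (c : ZMod p))).sum_comp F
  · simp

lemma rootN_succ (p : ℕ) [hp : Fact p.Prime] (hp2 : p ≠ 2) (m : ℤ) (hm : ¬ (p:ℤ) ∣ m) (k : ℕ) :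
    rootN p (k + 1) m = rootN p 1 m := by
  induction k with
  | zero => rfl
  | succ k ih =>
    have hp0 : (p : ℤ) ≠ 0 := by exact_mod_cast hp.out.ne_zero
    have h := key_fiber p hp2 m hm (fun x => if x = 0 then 1 else 0) k 0
    rw [← ih, rootN]
    simp only [Finset.sum_ite_eq', Finset.mem_univ, if_true, pow_zero, mul_one, zero_add] at h
    rw [← h, add_comm 1 (k+1)]
    refine Finset.sum_congr rfl fun a _ => ?_
    by_cases h1 : (p:ℤ) ^ (k + 1) ∣ ((a:ℤ)^2 - 4*m)
    · obtain ⟨c, hc⟩ := h1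
      have hk : (p:ℤ) ^ (k + 1) ≠ 0 := pow_ne_zero _ hp0
      rw [hc, Int.mul_ediv_cancel_left _ hk, pow_succ (p:ℤ) (k + 1)]
      simp only [mul_dvd_mul_iff_left hk, ZMod.intCast_zmod_eq_zero_iff_dvd, dvd_mul_right, if_true]
    · rw [if_neg h1, if_neg (fun h2 => h1 ((pow_dvd_pow _ (Nat.le_succ _)).trans h2))]

open Finset in
lemma rootN_one (p : ℕ) [hp : Fact p.Prime] (m : ℤ) :
    rootN p 1 m = ∑ x : ZMod p, if x ^ 2 - 4 * (m : ZMod p) = 0 then 1 else 0 := by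
  rw [← sum_range_zmod p, rootN, pow_one]
  refine sum_congr rfl fun a _ => ?_
  have := ZMod.intCast_zmod_eq_zero_iff_dvd ((a:ℤ)^2 - 4*m) p
  push_cast at this
  simp only [this, pow_one]

lemma jac_eq (p : ℕ) [hp : Fact p.Prime] (u : ℕ) (a : ℤ) :
    jacobiSym a (p ^ u) = (quadraticChar (ZMod p) (a : ZMod p)) ^ u := by
  rw [jacobiSym.pow_right, ← jacobiSym.legendreSym.to_jacobiSym]
  rfl

lemma char_pow (p : ℕ) [hp : Fact p.Prime] (n : ℕ) (x : ZMod p) :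
    (quadraticChar (ZMod p) x) ^ (n + 1) =
      if Even (n + 1) then (if x = 0 then 0 else 1) else quadraticChar (ZMod p) x := by
  by_cases hx : x = 0
  · subst hx; simp
  · rcases quadraticChar_dichotomy hx with h | h
    · simp [h, hx]
    · split_ifs with he
      · rw [h, he.neg_one_pow]
      · rw [h, (Nat.not_even_iff_odd.1 he).neg_one_pow]

open Finset in
lemma sum_char_sub (p : ℕ) [hp : Fact p.Prime] (hp2 : p ≠ 2) (D : ZMod p) (hD : D ≠ 0) :
    ∑ x : ZMod p, quadraticChar (ZMod p) (x ^ 2 - D) = -1 := by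
  have hF : ringChar (ZMod p) ≠ 2 := by rwa [ZMod.ringChar_zmod_n]
  set χ := quadraticChar (ZMod p) with hχ
  have h1 : ∑ x : ZMod p, χ (x ^ 2 - D) = ∑ y : ZMod p, (χ y + 1) * χ (y - D) := by
    rw [← sum_fiberwise univ (fun x : ZMod p => x ^ 2)]
    refine sum_congr rfl fun y _ => ?_
    rw [← quadraticChar_card_sqrts hF y]
    rw [sum_congr rfl (g := fun _ => χ (y - D)) (by intro x hx; simp at hx; rw [hx])]
    rw [sum_const, nsmul_eq_mul]
    congr 3
    ext x; simp
  have h2 : ∑ y : ZMod p, χ (y - D) = 0 := by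
    rw [← quadraticChar_sum_zero hF]
    exact (Equiv.subRight D).sum_comp χ
  have h3 : ∑ y : ZMod p, χ y * χ (y - D) = -1 := by
    rw [← Equiv.sum_comp (Equiv.mulLeft₀ D hD) (fun y => χ y * χ (y - D))]
    have hJ := jacobiSum_nontrivial_inv (quadraticChar_ne_one hF)
    rw [(quadraticChar_isQuadratic (ZMod p)).inv, jacobiSum] at hJ
    have h4 : ∀ z : ZMod p, χ (D * z) * χ (D * z - D) = χ (-1) * (χ z * χ (1 - z)) := by
      intro z
      have : D * z - D = D * (-1 * (1 - z)) := by ring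
      rw [this]
      simp only [map_mul]
      have := quadraticChar_sq_one hD
      linear_combination (χ z * (χ (-1) * χ (1 - z))) * this
    simp only [Equiv.mulLeft₀_apply, h4, ← mul_sum]
    rw [hJ]
    have := quadraticChar_sq_one (F := ZMod p) (a := -1) (by simp)
    linear_combination -this
  rw [h1]
  simp only [add_mul, one_mul, sum_add_distrib, h2, h3, add_zero]

open Finset in
lemma sum_char_pow (p : ℕ) [hp : Fact p.Prime] (hp2 : p ≠ 2) (n : ℕ) :
    ∑ x : ZMod p, (quadraticChar (ZMod p) x) ^ (n + 1) =
      if Even (n + 1) then (p:ℤ) - 1 else 0 := by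
  have hF : ringChar (ZMod p) ≠ 2 := by rwa [ZMod.ringChar_zmod_n]
  simp only [char_pow]
  split_ifs with h
  · have : ∀ x : ZMod p, (if x = 0 then (0:ℤ) else 1) = 1 - if x = 0 then 1 else 0 := by
      intro x; split_ifs <;> simp
    simp [this, sum_sub_distrib, ZMod.card]
  · exact quadraticChar_sum_zero hF

lemma Klp_zero_zero (p : ℕ) (m : ℤ) : Klp p 0 0 m = 1 := by simp [Klp]

open Finset in
lemma Klp_succ_zero (p : ℕ) [hp : Fact p.Prime] (hp2 : p ≠ 2) (m : ℤ) (hm : ¬ (p:ℤ) ∣ m) (n : ℕ) :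
    Klp p (n + 1) 0 m = (p:ℤ) ^ n * if Even (n + 1) then (p:ℤ) - rootN p 1 m else -1 := by
  have hD : (4 * (m : ZMod p)) ≠ 0 := by
    have h4 : (4 : ZMod p) = 2 * 2 := by norm_num
    rw [h4]
    refine mul_ne_zero (mul_ne_zero (four_ne p hp2) (four_ne p hp2)) ?_
    rwa [Ne, ZMod.intCast_zmod_eq_zero_iff_dvd]
  simp only [Klp, jac_eq, mul_zero, pow_zero, one_dvd, if_true, add_zero, Int.ediv_one]
  push_cast
  rw [sum_range_pow_zmod p (fun x => (quadraticChar (ZMod p) (x ^ 2 - 4 * (m : ZMod p))) ^ (n + 1))]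
  congr 1
  simp only [char_pow]
  split_ifs with h
  · have : ∀ x : ZMod p, (if x = 0 then (0:ℤ) else 1) = 1 - if x = 0 then 1 else 0 := by
      intro x; split_ifs <;> simp
    rw [rootN_one]
    simp only [this, sum_sub_distrib]
    simp [ZMod.card]
  · exact sum_char_sub p hp2 _ hD

lemma Klp_zero_succ (p : ℕ) [hp : Fact p.Prime] (hp2 : p ≠ 2) (m : ℤ) (hm : ¬ (p:ℤ) ∣ m) (v : ℕ) :
    Klp p 0 (v + 1) m = rootN p 1 m := by
  rw [← rootN_succ p hp2 m hm (2 * v + 1)]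
  simp [Klp, rootN, mul_add]

lemma Klp_succ_succ (p : ℕ) [hp : Fact p.Prime] (hp2 : p ≠ 2) (m : ℤ) (hm : ¬ (p:ℤ) ∣ m) (n v : ℕ) :
    Klp p (n + 1) (v + 1) m =
      rootN p 1 m * ((p:ℤ) ^ n * if Even (n + 1) then (p:ℤ) - 1 else 0) := by
  rw [← rootN_succ p hp2 m hm (2 * v + 1), ← sum_char_pow p hp2,
    ← key_fiber p hp2 m hm (fun x => (quadraticChar (ZMod p) x) ^ (n + 1))]
  simp only [Klp, jac_eq]
  rfl

lemma Klp_formula (p : ℕ) [hp : Fact p.Prime] (hp2 : p ≠ 2) (m : ℤ) (hm : ¬ (p:ℤ) ∣ m) (u v : ℕ) :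
    (Klp p u v m : ℂ) * ((p:ℂ)⁻¹) ^ u =
      (rootN p 1 m : ℂ) * ((if Even u then 1 - (p:ℂ)⁻¹ else 0) + if u = 0 then (p:ℂ)⁻¹ else 0)
      + (if Even u then 1 - (rootN p 1 m : ℂ) else -(p:ℂ)⁻¹) * if v = 0 then 1 else 0 := by
  have hp0 : (p : ℂ) ≠ 0 := by exact_mod_cast hp.out.ne_zero
  rcases u with _ | n <;> rcases v with _ | v
  · simp [Klp_zero_zero]
  · simp [Klp_zero_succ p hp2 m hm]
  · rw [Klp_succ_zero p hp2 m hm]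
    have : ((p:ℂ))^n * ((p:ℂ)⁻¹)^(n+1) = (p:ℂ)⁻¹ := by
      rw [pow_succ, ← mul_assoc, ← mul_pow, mul_inv_cancel₀ hp0]; simp
    have h2 := mul_inv_cancel₀ hp0
    push_cast
    simp only [Nat.succ_ne_zero, if_true, if_false, add_zero, mul_one, mul_zero]
    split_ifs with h
    · linear_combination ((p:ℂ) - (rootN p 1 m : ℂ)) * this + h2
    · linear_combination -this
  · rw [Klp_succ_succ p hp2 m hm]
    have : ((p:ℂ))^n * ((p:ℂ)⁻¹)^(n+1) = (p:ℂ)⁻¹ := by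
      rw [pow_succ, ← mul_assoc, ← mul_pow, mul_inv_cancel₀ hp0]; simp
    have h2 := mul_inv_cancel₀ hp0
    push_cast
    simp only [Nat.succ_ne_zero, if_true, if_false, add_zero, mul_one, mul_zero]
    split_ifs with h
    · linear_combination (rootN p 1 m : ℂ) * ((p:ℂ) - 1) * this + (rootN p 1 m : ℂ) * h2
    · simp

lemma hasSum_parity (x α β : ℂ) (hx : ‖x‖ < 1) :
    HasSum (fun u : ℕ => (if Even u then α else β) * x ^ u) ((α + β * x) / (1 - x ^ 2)) := by
  have hx2 : ‖x ^ 2‖ < 1 := by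
    rw [norm_pow]; exact pow_lt_one₀ (norm_nonneg _) hx two_ne_zero
  have hg := hasSum_geometric_of_norm_lt_one hx2
  have h := HasSum.even_add_odd (f := fun u : ℕ => (if Even u then α else β) * x ^ u)
    (m := α * (1 - x ^ 2)⁻¹) (m' := β * x * (1 - x ^ 2)⁻¹) ?_ ?_
  · convert h using 1
    ring
  · have := hg.mul_left α
    simpa [pow_mul] using this
  · have := hg.mul_left (β * x)
    have e : (fun k : ℕ => (if Even (2 * k + 1) then α else β) * x ^ (2 * k + 1)) =
        fun k => β * x * (x ^ 2) ^ k := by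
      funext k
      rw [if_neg (by simp), pow_succ, pow_mul]; ring
    rw [e]; exact this

lemma hasSum_prod_mul {f g : ℕ → ℂ} {a b : ℂ} (hf : HasSum f a) (hg : HasSum g b) :
    HasSum (fun uv : ℕ × ℕ => f uv.1 * g uv.2) (a * b) := by
  have h1 := hf.summable.norm
  have h2 := hg.summable.norm
  rw [← hf.tsum_eq, ← hg.tsum_eq, tsum_mul_tsum_of_summable_norm h1 h2]
  exact (summable_mul_of_summable_norm h1 h2).hasSum

theorem stmt4 (p : ℕ) (hp : p.Prime) (hp2 : p ≠ 2) (m : ℤ) (hm : ¬ (p:ℤ) ∣ m)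
    (s : ℂ) (hs : 0 < s.re) :
    Summable (fun uv : ℕ × ℕ =>
      ‖(Klp p uv.1 uv.2 m : ℂ) * (p:ℂ) ^ (-(uv.1:ℂ) * (s+1)) * (p:ℂ) ^ (-(uv.2:ℂ) * (2*s+1))‖) ∧
    ∑' uv : ℕ × ℕ,
        (Klp p uv.1 uv.2 m : ℂ) * (p:ℂ) ^ (-(uv.1:ℂ) * (s+1)) * (p:ℂ) ^ (-(uv.2:ℂ) * (2*s+1))
      = (1 - (p:ℂ) ^ (-(s+1))) / (1 - (p:ℂ) ^ (-(2*s))) := by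
  have : Fact p.Prime := ⟨hp⟩
  have hp0 : (p : ℂ) ≠ 0 := by exact_mod_cast hp.ne_zero
  have hp1 : (1:ℝ) < p := by exact_mod_cast hp.one_lt
  obtain ⟨x, hxd⟩ : ∃ x : ℂ, x = (p:ℂ) ^ (-s) := ⟨_, rfl⟩
  have hx : ‖x‖ < 1 := by
    rw [hxd, Complex.norm_natCast_cpow_of_pos hp.pos]
    exact Real.rpow_lt_one_of_one_lt_of_neg hp1 (by simpa using hs)
  have e1 : (p:ℂ) ^ (-(s+1)) = x * (p:ℂ)⁻¹ := by
    rw [neg_add, Complex.cpow_add _ _ hp0, Complex.cpow_neg_one, hxd]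
  have e2 : (p:ℂ) ^ (-(2*s)) = x ^ 2 := by
    rw [hxd, ← Complex.cpow_nat_mul]; congr 1; push_cast; ring
  have e3 : (p:ℂ) ^ (-(2*s+1)) = x ^ 2 * (p:ℂ)⁻¹ := by
    rw [neg_add, Complex.cpow_add _ _ hp0, Complex.cpow_neg_one, e2]
  have e4 : ∀ u : ℕ, (p:ℂ) ^ (-(u:ℂ) * (s+1)) = (p:ℂ)⁻¹ ^ u * x ^ u := by
    intro u
    rw [← mul_pow, mul_comm _ x, ← e1, ← Complex.cpow_nat_mul]; congr 1; ring
  have e5 : ∀ v : ℕ, (p:ℂ) ^ (-(v:ℂ) * (2*s+1)) = (x ^ 2 * (p:ℂ)⁻¹) ^ v := by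
    intro v
    rw [← e3, ← Complex.cpow_nat_mul]; congr 1; ring
  have hx2 : ‖x ^ 2‖ < 1 := by
    rw [norm_pow]; exact pow_lt_one₀ (norm_nonneg _) hx two_ne_zero
  have hy : ‖x ^ 2 * (p:ℂ)⁻¹‖ < 1 := by
    rw [norm_mul, norm_inv, Complex.norm_natCast]
    exact mul_lt_one_of_nonneg_of_lt_one_left (norm_nonneg _) hx2 (inv_le_one_of_one_le₀ hp1.le)
  have n1 : 1 - x ^ 2 ≠ 0 := by
    intro h; rw [← sub_eq_zero.1 h] at hx2; simp at hx2
  have n2 : 1 - x ^ 2 * (p:ℂ)⁻¹ ≠ 0 := by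
    intro h; rw [← sub_eq_zero.1 h] at hy; simp at hy
  obtain ⟨N, hN⟩ : ∃ N : ℂ, N = (rootN p 1 m : ℂ) := ⟨_, rfl⟩
  have s1 := (((hasSum_parity x (1 - (p:ℂ)⁻¹) 0 hx).add
    (hasSum_ite_eq (0:ℕ) ((p:ℂ)⁻¹))).mul_left N)
  have s2 := hasSum_prod_mul s1 (hasSum_geometric_of_norm_lt_one hy)
  have s3 := hasSum_prod_mul (hasSum_parity x (1 - N) (-(p:ℂ)⁻¹) hx) (hasSum_ite_eq (0:ℕ) (1:ℂ))
  have key : HasSum (fun uv : ℕ × ℕ => (Klp p uv.1 uv.2 m : ℂ) * (p:ℂ) ^ (-(uv.1:ℂ) * (s+1))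
      * (p:ℂ) ^ (-(uv.2:ℂ) * (2*s+1))) ((1 - (p:ℂ) ^ (-(s+1))) / (1 - (p:ℂ) ^ (-(2*s)))) := by
    convert s2.add s3 using 1
    · funext ⟨u, v⟩
      simp only [e4, e5]
      have hK := Klp_formula p hp2 m hm u v
      rw [← hN] at hK
      rw [← mul_assoc, hK]
      by_cases hu : u = 0 <;> by_cases hv : v = 0
      · subst hu hv; simp
      · subst hu; simp [hv]
      · subst hv; simp only [hu, if_true, if_false]; ring
      · simp [hu, hv]; ring
    · rw [e1, e2]
      have n3 : (p:ℂ) - x ^ 2 ≠ 0 := by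
        intro h; apply n2; rw [← sub_eq_zero.1 h, mul_inv_cancel₀ hp0, sub_self]
      field_simp
      ring
  exact ⟨key.summable.norm, key.tsum_eq⟩
end

section
/- Let p be an odd prime, let m ∈ ℤ be nonzero with p ∣ m, and let s ∈ ℂ with Re s > 0. Then the double series Σ_{u≥0} Σ_{v≥0} Kl_p(u,v;m) · p^{−u(s+1)} · p^{−v(2s+1)} converges absolutely, and its sum equals ((1 − p^{−(s+1)})/(1 − p^{−2s})) · ((1 − p^{−s(v_p(m)+1)})/(1 − p^{−s})), where v_p(m) is the p-adic valuation of m. -/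
lemma k_sum_range_mul (A B : ℕ) (f : ℕ → ℤ) :
    ∑ x ∈ Finset.range (A * B), f x
      = ∑ b ∈ Finset.range B, ∑ a ∈ Finset.range A, f (a + A * b) := by
  induction B with
  | zero => simp
  | succ B ih =>
    rw [Nat.mul_succ, Finset.sum_range_add, ih, Finset.sum_range_succ]
    congr 1
    exact Finset.sum_congr rfl fun a _ => by rw [add_comm]

lemma k_sum_zmod (p : ℕ) [Fact p.Prime] (F : ZMod p → ℤ) :
    ∑ t ∈ Finset.range p, F (t : ZMod p) = ∑ x : ZMod p, F x := by
  have hp : 0 < p := (Fact.out : p.Prime).pos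
  refine Finset.sum_nbij' (fun t => (t : ZMod p)) (fun x => x.val) ?_ ?_ ?_ ?_ ?_
  · simp
  · intro x _; simpa using ZMod.val_lt x
  · intro t ht; exact ZMod.val_cast_of_lt (by simpa using ht)
  · intro x _; simp
  · simp

lemma k_sum_zmod_mul (p B : ℕ) [Fact p.Prime] (F : ZMod p → ℤ) :
    ∑ t ∈ Finset.range (p * B), F (t : ZMod p) = B * ∑ x : ZMod p, F x := by
  rw [k_sum_range_mul, ← k_sum_zmod]
  simp

lemma k_affine (p : ℕ) [Fact p.Prime] (F : ZMod p → ℤ) (q d : ZMod p) (hd : d ≠ 0) :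
    ∑ x : ZMod p, F (q + d * x) = ∑ x : ZMod p, F x := by
  refine Finset.sum_nbij' (fun x => q + d * x) (fun y => d⁻¹ * (y - q)) ?_ ?_ ?_ ?_ ?_
  · simp
  · simp
  · intro x _; field_simp; ring
  · intro x _; field_simp; ring
  · simp

lemma k_jac (p u : ℕ) [Fact p.Prime] (x : ℤ) :
    jacobiSym x (p ^ u) = (quadraticChar (ZMod p) (x : ZMod p)) ^ u := by
  rw [jacobiSym.pow_right, ← jacobiSym.legendreSym.to_jacobiSym]
  rfl

lemma k_char (p : ℕ) [Fact p.Prime] (hp2 : p ≠ 2) : ringChar (ZMod p) ≠ 2 := by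
  rw [ZMod.ringChar_zmod_n]; exact hp2

lemma k_two (p : ℕ) [Fact p.Prime] (hp2 : p ≠ 2) : (2 : ZMod p) ≠ 0 :=
  Ring.two_ne_zero (k_char p hp2)

/-- Even powers of the quadratic character. -/
lemma k_even (p : ℕ) [Fact p.Prime] (x : ZMod p) (j : ℕ) :
    (quadraticChar (ZMod p) x) ^ (2 * j + 2) = 1 - if x = 0 then 1 else 0 := by
  split_ifs with h
  · subst h; simp
  · rw [show 2 * j + 2 = 2 * (j + 1) by ring, pow_mul, quadraticChar_sq_one h]; simp

lemma k_odd (p : ℕ) [Fact p.Prime] (x : ZMod p) (j : ℕ) :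
    (quadraticChar (ZMod p) x) ^ (2 * j + 1) = quadraticChar (ZMod p) x := by
  by_cases h : x = 0
  · subst h; simp
  · rw [pow_succ, pow_mul, quadraticChar_sq_one h]; simp

lemma k_sq_sum (p : ℕ) [Fact p.Prime] (hp2 : p ≠ 2) (F : ZMod p → ℤ) :
    ∑ x : ZMod p, F (x ^ 2) = ∑ y : ZMod p, (quadraticChar (ZMod p) y + 1) * F y := by
  rw [← Finset.sum_fiberwise Finset.univ (fun x : ZMod p => x ^ 2)]
  refine Finset.sum_congr rfl fun y _ => ?_
  rw [← quadraticChar_card_sqrts (k_char p hp2) y]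
  rw [Finset.sum_congr rfl (g := fun _ => F y)]
  · rw [Finset.sum_const, nsmul_eq_mul]
    congr 3
    ext x; simp
  · intro x hx
    rw [(Finset.mem_filter.1 hx).2]

lemma k_conic (p : ℕ) [Fact p.Prime] (hp2 : p ≠ 2) (c : ZMod p) (hc : c ≠ 0) :
    ∑ x : ZMod p, quadraticChar (ZMod p) (x ^ 2 - c) = -1 := by
  rw [k_sq_sum p hp2 (fun y => quadraticChar (ZMod p) (y - c))]
  have h0 := quadraticChar_sum_zero (k_char p hp2)
  have h1 : ∑ y : ZMod p, quadraticChar (ZMod p) (y - c) = 0 := by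
    rw [← h0, ← k_affine p (fun y => quadraticChar (ZMod p) y) (-c) 1 one_ne_zero]
    exact Finset.sum_congr rfl fun y _ => by congr 1; ring
  have h2 : ∑ y : ZMod p, quadraticChar (ZMod p) (1 - c * y) = 0 := by
    rw [← h0, ← k_affine p (fun y => quadraticChar (ZMod p) y) 1 (-c) (neg_ne_zero.2 hc)]
    exact Finset.sum_congr rfl fun y _ => by congr 1; ring
  have h3 : ∑ y : ZMod p, quadraticChar (ZMod p) y * quadraticChar (ZMod p) (y - c)
      = ∑ y : ZMod p, (quadraticChar (ZMod p) (1 - c * y) - if y = 0 then 1 else 0) := by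
    refine Finset.sum_nbij' (fun x => x⁻¹) (fun x => x⁻¹) ?_ ?_ ?_ ?_ ?_
    · simp
    · simp
    · simp
    · simp
    · intro y _
      by_cases hy : y = 0
      · subst hy; simp
      · have : y - c = y * (1 - c * y⁻¹) := by field_simp
        rw [this, map_mul, ← mul_assoc, ← sq, quadraticChar_sq_one hy]
        simp [hy]
  rw [Finset.sum_sub_distrib, h2] at h3
  simp only [add_mul, one_mul, Finset.sum_add_distrib, h1, h3]
  simp

/-- number of square roots of `4m` mod `p^j` -/
noncomputable def kN (p j : ℕ) (m : ℤ) : ℤ :=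
  ∑ a ∈ Finset.range (p ^ j), if ((p:ℤ) ^ j ∣ ((a:ℤ)^2 - 4*m)) then 1 else 0

lemma k_dne (p : ℕ) [Fact p.Prime] (hp2 : p ≠ 2) (m : ℤ) (hm : ¬ (p:ℤ) ∣ m) (a : ℤ)
    (h : (p:ℤ) ∣ a ^ 2 - 4 * m) : (2 * a : ZMod p) ≠ 0 := by
  have h2 := k_two p hp2
  intro h0
  have ha : (a : ZMod p) = 0 := by simpa [h2] using h0
  rw [← ZMod.intCast_zmod_eq_zero_iff_dvd] at h
  push_cast at h
  rw [ha] at h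
  apply hm
  rw [← ZMod.intCast_zmod_eq_zero_iff_dvd]
  have h4 : (4 : ZMod p) = 2 * 2 := by norm_num
  simpa [h4, h2] using h

lemma kN_succ (p : ℕ) [Fact p.Prime] (hp2 : p ≠ 2) (m : ℤ) (hm : ¬ (p:ℤ) ∣ m) (j : ℕ)
    (hj : j ≠ 0) : kN p (j + 1) m = kN p j m := by
  have hp : (p:ℤ) ≠ 0 := by exact_mod_cast (Fact.out : p.Prime).ne_zero
  unfold kN
  rw [pow_succ, k_sum_range_mul, Finset.sum_comm]
  refine Finset.sum_congr rfl fun a _ => ?_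
  split_ifs with h
  · obtain ⟨q, hq⟩ := h
    have hd := k_dne p hp2 m hm a ((dvd_pow_self _ hj).trans ⟨q, hq⟩)
    have key : ∀ t : ℕ, (if ((p:ℤ) ^ (j+1) ∣ (((a + p ^ j * t : ℕ):ℤ)^2 - 4*m)) then (1:ℤ) else 0)
        = (fun x : ZMod p => if x = 0 then (1:ℤ) else 0) ((q : ZMod p) + (2 * (a:ℤ) : ZMod p) * t) := by
      intro t
      have e : (((a + p ^ j * t : ℕ):ℤ)^2 - 4*m) = (p:ℤ) ^ j * (q + 2 * a * t + p ^ j * t ^ 2) := by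
        push_cast
        linear_combination hq
      have e2 : ((q : ZMod p) + (2 * (a:ℤ) : ZMod p) * t)
          = ((q + 2 * a * t + p ^ j * t ^ 2 : ℤ) : ZMod p) := by
        push_cast; simp [hj]
      simp only [e2, ZMod.intCast_zmod_eq_zero_iff_dvd]
      rw [e, pow_succ (p:ℤ) j]
      simp only [mul_dvd_mul_iff_left (pow_ne_zero j hp)]
    rw [Finset.sum_congr rfl fun t _ => key t]
    rw [k_sum_zmod p (fun x => (fun x : ZMod p => if x = 0 then (1:ℤ) else 0) ((q : ZMod p) + (2 * (a:ℤ) : ZMod p) * x)),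
      k_affine p (fun x : ZMod p => if x = 0 then (1:ℤ) else 0) _ _ hd]
    simp
  · refine Finset.sum_eq_zero fun t _ => if_neg fun h' => h ?_
    have h1 : (p:ℤ) ^ j ∣ (((a + p ^ j * t : ℕ):ℤ)^2 - 4*m) := (pow_dvd_pow _ (Nat.le_succ _)).trans h'
    have e : ((a:ℤ)^2 - 4*m) = (((a + p ^ j * t : ℕ):ℤ)^2 - 4*m) - p ^ j * (2 * a * t + p ^ j * t ^ 2) := by
      push_cast; ring
    rw [e]; exact dvd_sub h1 (dvd_mul_right _ _)

lemma kN_eq (p : ℕ) [Fact p.Prime] (hp2 : p ≠ 2) (m : ℤ) (hm : ¬ (p:ℤ) ∣ m) (j : ℕ) :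
    kN p (j + 1) m = kN p 1 m := by
  induction j with
  | zero => rfl
  | succ j ih => rw [kN_succ p hp2 m hm (j+1) (by simp), ih]

lemma kN_one (p : ℕ) [Fact p.Prime] (m : ℤ) :
    kN p 1 m = ∑ x : ZMod p, if x ^ 2 - 4 * m = 0 then 1 else 0 := by
  rw [← k_sum_zmod]
  unfold kN
  rw [pow_one]
  refine Finset.sum_congr rfl fun a _ => ?_
  simp only [pow_one, ← ZMod.intCast_zmod_eq_zero_iff_dvd]
  simp

lemma Klp_zero_left (p v : ℕ) (m : ℤ) : Klp p 0 v m = kN p (2 * v) m := by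
  unfold Klp kN; simp

lemma Klp_zero_right (p u : ℕ) [Fact p.Prime] (m : ℤ) :
    Klp p (u + 1) 0 m = p ^ u * ∑ x : ZMod p, quadraticChar (ZMod p) (x ^ 2 - 4 * m) ^ (u + 1) := by
  unfold Klp
  have := k_sum_zmod_mul p (p ^ u) (fun x => quadraticChar (ZMod p) (x ^ 2 - 4 * m) ^ (u + 1))
  rw [← pow_succ'] at this
  push_cast at this
  rw [← this]
  refine Finset.sum_congr (by simp) fun a _ => ?_
  simp only [mul_zero, pow_zero, one_dvd, if_true, Int.ediv_one, k_jac]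
  push_cast
  rfl

lemma Klp_unit (p u v : ℕ) [Fact p.Prime] (hp2 : p ≠ 2) (m : ℤ) (hm : ¬ (p:ℤ) ∣ m) (hv : v ≠ 0) :
    Klp p (u + 1) v m = kN p 1 m * (p ^ u * ∑ x : ZMod p, quadraticChar (ZMod p) x ^ (u + 1)) := by
  have hp : (p:ℤ) ≠ 0 := by exact_mod_cast (Fact.out : p.Prime).ne_zero
  have hv2 : 2 * v ≠ 0 := by omega
  rw [← kN_eq p hp2 m hm (2 * v - 1), Nat.sub_add_cancel (by omega)]
  unfold kN Klp
  rw [add_comm, pow_add, k_sum_range_mul, Finset.sum_comm, Finset.sum_mul]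
  refine Finset.sum_congr rfl fun a _ => ?_
  split_ifs with h
  · obtain ⟨q, hq⟩ := h
    have hd := k_dne p hp2 m hm a ((dvd_pow_self _ hv2).trans ⟨q, hq⟩)
    rw [one_mul, ← k_affine p (fun x => quadraticChar (ZMod p) x ^ (u+1)) q _ hd]
    have := k_sum_zmod_mul p (p ^ u) (fun x => quadraticChar (ZMod p) ((q : ZMod p) + (2 * (a:ℤ) : ZMod p) * x) ^ (u + 1))
    rw [← pow_succ'] at this
    push_cast at this ⊢
    rw [← this]
    refine Finset.sum_congr rfl fun t _ => ?_
    have e : (((a:ℤ) + p ^ (2*v) * t)^2 - 4*m) = (p:ℤ) ^ (2*v) * (q + 2 * a * t + p ^ (2*v) * t ^ 2) := by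
      linear_combination hq
    rw [e, if_pos (dvd_mul_right _ _), Int.mul_ediv_cancel_left _ (pow_ne_zero _ hp), k_jac]
    push_cast
    simp [hv]
  · rw [zero_mul]
    refine Finset.sum_eq_zero fun t _ => if_neg fun h' => h ?_
    have e : ((a:ℤ)^2 - 4*m) = (((a + p ^ (2*v) * t : ℕ):ℤ)^2 - 4*m) - p ^ (2*v) * (2 * a * t + p ^ (2*v) * t ^ 2) := by
      push_cast; ring
    rw [e]; exact dvd_sub h' (dvd_mul_right _ _)

lemma Klp_rec (p u v : ℕ) [Fact p.Prime] (m : ℤ) :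
    Klp p u (v + 1) (p ^ 2 * m) = p * Klp p u v m := by
  have hp : (p:ℤ) ≠ 0 := by exact_mod_cast (Fact.out : p.Prime).ne_zero
  have hpp : Prime (p:ℤ) := Nat.prime_iff_prime_int.1 Fact.out
  unfold Klp
  rw [show u + 2 * (v+1) = (u + 2 * v + 1) + 1 by ring, pow_succ', k_sum_range_mul, pow_succ,
    k_sum_range_mul]
  have h1 : ∀ b : ℕ, ∑ a ∈ Finset.range p,
      (if (p:ℤ) ^ (2 * (v+1)) ∣ ((a + p * b : ℕ) : ℤ) ^ 2 - 4 * (p ^ 2 * m) then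
        jacobiSym ((((a + p * b : ℕ) : ℤ) ^ 2 - 4 * (p ^ 2 * m)) / (p:ℤ) ^ (2 * (v+1))) (p ^ u) else 0)
      = if (p:ℤ) ^ (2 * v) ∣ (b : ℤ) ^ 2 - 4 * m then
        jacobiSym (((b : ℤ) ^ 2 - 4 * m) / (p:ℤ) ^ (2 * v)) (p ^ u) else 0 := by
    intro b
    rw [Finset.sum_eq_single 0]
    · have e : ((0 + p * b : ℕ) : ℤ) ^ 2 - 4 * (p ^ 2 * m) = p ^ 2 * (b ^ 2 - 4 * m) := by
        push_cast; ring
      rw [e, show 2 * (v + 1) = 2 + 2 * v by ring, pow_add, Int.mul_ediv_mul_of_pos]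
      · simp only [mul_dvd_mul_iff_left (pow_ne_zero 2 hp)]
      · exact pow_pos (lt_of_le_of_ne (by positivity) hp.symm) _
    · intro a ha ha0
      refine if_neg fun h => ha0 ?_
      have h2 : (p:ℤ) ∣ ((a + p * b : ℕ) : ℤ) ^ 2 - 4 * (p ^ 2 * m) :=
        (dvd_pow_self _ (by omega)).trans h
      have h3 : (p:ℤ) ∣ (a:ℤ) ^ 2 := by
        have e : (a:ℤ) ^ 2 = (((a + p * b : ℕ) : ℤ) ^ 2 - 4 * (p ^ 2 * m))
          - p * (2 * a * b + p * b ^ 2 - 4 * p * m) := by push_cast; ring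
        rw [e]; exact dvd_sub h2 (dvd_mul_right _ _)
      have h4 : p ∣ a := by exact_mod_cast hpp.dvd_of_dvd_pow h3
      exact Nat.eq_zero_of_dvd_of_lt h4 (Finset.mem_range.1 ha)
    · intro h; exact absurd (Finset.mem_range.2 (Fact.out : p.Prime).pos) h
  rw [Finset.sum_congr rfl fun t _ => Finset.sum_congr rfl fun b _ => h1 (b + p ^ (u + 2 * v) * t)]
  rw [← nsmul_eq_mul, ← Finset.card_range p, ← Finset.sum_const, Finset.card_range]
  refine Finset.sum_congr rfl fun t _ => Finset.sum_congr rfl fun b _ => ?_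
  have e : (((b + p ^ (u + 2 * v) * t : ℕ) : ℤ) ^ 2 - 4 * m)
      = (b:ℤ) ^ 2 - 4 * m + p ^ (2 * v) * (p ^ u * (2 * b * t + p ^ (u + 2 * v) * t ^ 2)) := by
    push_cast; ring
  rw [e]
  by_cases h : (p:ℤ) ^ (2 * v) ∣ (b : ℤ) ^ 2 - 4 * m
  · rw [if_pos h, if_pos (dvd_add h (dvd_mul_right _ _)), Int.add_mul_ediv_left _ _ (pow_ne_zero _ hp)]
    apply jacobiSym.mod_left'
    push_cast
    simp
  · rw [if_neg h, if_neg]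
    intro h'
    exact h ((dvd_add_left (dvd_mul_right _ _)).1 h')

lemma Klp_one (p u v : ℕ) [Fact p.Prime] (hp2 : p ≠ 2) (n : ℤ) (hn : ¬ (p:ℤ) ∣ n) :
    Klp p u (v + 1) (p * n) = 0 := by
  have hp : (p:ℤ) ≠ 0 := by exact_mod_cast (Fact.out : p.Prime).ne_zero
  have hpp : Prime (p:ℤ) := Nat.prime_iff_prime_int.1 Fact.out
  unfold Klp
  refine Finset.sum_eq_zero fun a _ => if_neg fun h => ?_
  have h2 : (p:ℤ) ^ 2 ∣ (a:ℤ) ^ 2 - 4 * (p * n) := (pow_dvd_pow _ (by omega)).trans h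
  have h3 : (p:ℤ) ∣ (a:ℤ) ^ 2 := by
    have := dvd_add ((dvd_pow_self _ two_ne_zero).trans h2) (dvd_mul_right (p:ℤ) (4 * n))
    rwa [show (a:ℤ) ^ 2 - 4 * (p * n) + p * (4 * n) = (a:ℤ) ^ 2 by ring] at this
  obtain ⟨c, hc⟩ := hpp.dvd_of_dvd_pow h3
  obtain ⟨d, hd⟩ := h2
  rw [hc] at hd
  have h4 : (p:ℤ) ∣ 4 * n := ⟨c ^ 2 - d, by
    apply mul_left_cancel₀ hp; linear_combination -hd⟩
  rcases hpp.dvd_or_dvd h4 with h5 | h5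
  · have h6 : (p:ℤ) ∣ 2 := hpp.dvd_of_dvd_pow (n := 2) (by norm_num; exact h5)
    have h7 : p ∣ 2 := by exact_mod_cast h6
    exact hp2 ((Nat.prime_dvd_prime_iff_eq Fact.out Nat.prime_two).1 h7)
  · exact hn h5

lemma k_mul (f g : ℕ → ℂ) (a b : ℂ) (hf : HasSum f a) (hg : HasSum g b) :
    HasSum (fun x : ℕ × ℕ => f x.1 * g x.2) (a * b) := by
  have h1 : Summable (fun x => ‖f x‖) := hf.summable.norm
  have h2 : Summable (fun x => ‖g x‖) := hg.summable.norm
  have h3 : Summable (fun x : ℕ × ℕ => f x.1 * g x.2) := summable_mul_of_summable_norm h1 h2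
  exact HasSum.mul hf hg h3

lemma k_congr {ι : Type} {f g : ι → ℂ} {a b : ℂ} (h : HasSum f a) (hf : ∀ x, g x = f x)
    (hb : b = a) : HasSum g b := by
  rw [hb, funext hf]; exact h

lemma k_hs (X α β : ℂ) (hX : ‖X‖ < 1) (g : ℕ → ℂ) (h0 : g 0 = 1)
    (h1 : ∀ j, g (2 * j + 1) = α * X ^ (2 * j + 1))
    (h2 : ∀ j, g (2 * j + 2) = β * X ^ (2 * j + 2)) :
    HasSum g (1 + (α * X + β * X ^ 2) * (1 - X ^ 2)⁻¹) := by
  have hX2 : ‖X ^ 2‖ < 1 := by rw [norm_pow]; exact pow_lt_one₀ (norm_nonneg _) hX two_ne_zero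
  have hg := hasSum_geometric_of_norm_lt_one hX2
  have ho : HasSum (fun k => g (2 * k + 1)) (α * X * (1 - X ^ 2)⁻¹) := by
    refine k_congr (hg.mul_left (α * X)) (fun k => ?_) rfl
    rw [h1]; ring
  have he : HasSum (fun k => g (2 * k)) (1 + β * X ^ 2 * (1 - X ^ 2)⁻¹) := by
    have : HasSum (fun k => g (2 * (k + 1))) (β * X ^ 2 * (1 - X ^ 2)⁻¹) := by
      refine k_congr (hg.mul_left (β * X ^ 2)) (fun k => ?_) rfl
      rw [show 2 * (k + 1) = 2 * k + 2 by ring, h2]; ring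
    have := HasSum.zero_add (f := fun k => g (2 * k)) this
    simpa [h0] using this
  refine k_congr (he.even_add_odd ho) (fun k => rfl) ?_
  ring

lemma k_split (f : ℕ × ℕ → ℂ) (A B : ℂ) (hA : HasSum (fun u => f (u, 0)) A)
    (hB : HasSum (fun x : ℕ × ℕ => f (x.1, x.2 + 1)) B) : HasSum f (A + B) := by
  have i1 : Function.Injective (fun u : ℕ => ((u, 0) : ℕ × ℕ)) := by
    intro a b h; simpa using h
  have i2 : Function.Injective (fun x : ℕ × ℕ => ((x.1, x.2 + 1) : ℕ × ℕ)) := by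
    rintro ⟨a, b⟩ ⟨c, d⟩ h; simpa using h
  have e1 : HasSum (fun x : ℕ × ℕ => if x.2 = 0 then f x else 0) A := by
    rw [← i1.hasSum_iff]
    · simpa [Function.comp_def] using hA
    · rintro ⟨a, b⟩ h
      refine if_neg fun hb => h ⟨a, ?_⟩
      simp only at hb
      rw [hb]
  have e2 : HasSum (fun x : ℕ × ℕ => if x.2 = 0 then 0 else f x) B := by
    rw [← i2.hasSum_iff]
    · simpa [Function.comp_def] using hB
    · rintro ⟨a, b⟩ h
      refine if_pos ?_
      by_contra hb
      simp only at hb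
      exact h ⟨(a, b - 1), by simp; omega⟩
  refine k_congr (e1.add e2) (fun x => ?_) rfl
  split_ifs <;> simp

/-- the general term of the double series -/
noncomputable def kT (p : ℕ) (X : ℂ) (m : ℤ) (x : ℕ × ℕ) : ℂ :=
  (Klp p x.1 x.2 m : ℂ) * (X ^ x.1 * ((p:ℂ)⁻¹) ^ x.1) * (X ^ (2 * x.2) * ((p:ℂ)⁻¹) ^ x.2)

/-- the `v = 0` part when `p ∣ m` -/
lemma k_row_dvd (p : ℕ) [Fact p.Prime] (X : ℂ) (hX : ‖X‖ < 1) (m : ℤ)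
    (hm : (p:ℤ) ∣ m) :
    HasSum (fun u => kT p X m (u, 0)) ((1 - X * (p:ℂ)⁻¹) * (1 - X)⁻¹) := by
  have hp : (p:ℂ) ≠ 0 := by exact_mod_cast (Fact.out : p.Prime).ne_zero
  have hm0 : (m : ZMod p) = 0 := (ZMod.intCast_zmod_eq_zero_iff_dvd _ _).2 hm
  have hS : ∀ u, Klp p (u + 1) 0 m = p ^ u * (p - 1) := by
    intro u
    rw [Klp_zero_right, hm0]
    congr 1
    have : ∀ x : ZMod p, quadraticChar (ZMod p) (x ^ 2 - 4 * 0) ^ (u + 1)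
        = 1 - if x = 0 then 1 else 0 := by
      intro x
      split_ifs with h
      · subst h; simp
      · rw [mul_zero, sub_zero, quadraticChar_sq_one' h]; simp
    rw [Finset.sum_congr rfl fun x _ => this x]
    simp [ZMod.card]
  have hT : ∀ u, kT p X m (u + 1, 0) = (1 - (p:ℂ)⁻¹) * X ^ (u + 1) := by
    intro u
    simp only [kT, hS]
    push_cast
    rw [inv_pow]
    simp only [mul_zero, pow_zero, mul_one]
    field_simp
    try ring
  have h1X : 1 - X ≠ 0 := by
    intro h
    rw [← sub_eq_zero.1 h] at hX; simp at hX
  have h2X : 1 + X ≠ 0 := by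
    intro h
    rw [show X = -1 by linear_combination h] at hX; simp at hX
  have h3X : 1 - X ^ 2 ≠ 0 := by
    rw [show 1 - X ^ 2 = (1 - X) * (1 + X) by ring]; exact mul_ne_zero h1X h2X
  convert k_hs X (1 - (p:ℂ)⁻¹) (1 - (p:ℂ)⁻¹) hX (fun u => kT p X m (u, 0)) ?_ ?_ ?_ using 1
  · rw [show 1 - X ^ 2 = (1 - X) * (1 + X) by ring]
    field_simp
    ring
  · simp [kT, Klp_zero_zero]
  · intro j; exact hT (2 * j)
  · intro j; exact hT (2 * j + 1)

set_option maxHeartbeats 400000 in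
lemma k_base0 (p : ℕ) [Fact p.Prime] (hp2 : p ≠ 2) (X : ℂ) (hX : ‖X‖ < 1) (m : ℤ)
    (hm : ¬ (p:ℤ) ∣ m) :
    HasSum (kT p X m) ((1 - X * (p:ℂ)⁻¹) * (1 - X ^ 2)⁻¹) := by
  have hp : (p:ℂ) ≠ 0 := by exact_mod_cast (Fact.out : p.Prime).ne_zero
  have hm0 : (m : ZMod p) ≠ 0 := fun h => hm ((ZMod.intCast_zmod_eq_zero_iff_dvd _ _).1 h)
  have h4m : (4 * m : ZMod p) ≠ 0 := by
    have h2 := k_two p hp2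
    rw [show (4 : ZMod p) = 2 * 2 by norm_num]
    exact mul_ne_zero (mul_ne_zero h2 h2) hm0
  obtain ⟨r, hr⟩ : ∃ r : ℤ, r = kN p 1 m := ⟨_, rfl⟩
  have hX2 : ‖X ^ 2‖ < 1 := by rw [norm_pow]; exact pow_lt_one₀ (norm_nonneg _) hX two_ne_zero
  have hpn : ‖(p:ℂ)⁻¹‖ ≤ 1 := by
    rw [norm_inv, Complex.norm_natCast]
    exact inv_le_one_of_one_le₀ (by exact_mod_cast (Fact.out : p.Prime).one_lt.le)
  have hY : ‖X ^ 2 * (p:ℂ)⁻¹‖ < 1 := by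
    rw [norm_mul]; exact mul_lt_one_of_nonneg_of_lt_one_left (norm_nonneg _) hX2 hpn
  have hne : ∀ Y : ℂ, ‖Y‖ < 1 → 1 - Y ≠ 0 := by
    intro Y hY h
    rw [← sub_eq_zero.1 h] at hY; simp at hY
  have hA : HasSum (fun u => kT p X m (u, 0))
      (1 + (-(p:ℂ)⁻¹ * X + (1 - r * (p:ℂ)⁻¹) * X ^ 2) * (1 - X ^ 2)⁻¹) := by
    apply k_hs X _ _ hX
    · simp [kT, Klp_zero_zero]
    · intro j
      have : Klp p (2 * j + 1) 0 m = p ^ (2 * j) * (-1) := by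
        rw [Klp_zero_right, Finset.sum_congr rfl fun x _ => k_odd p _ j, k_conic p hp2 _ h4m]
      simp only [kT, this]
      push_cast
      rw [inv_pow]
      simp only [mul_zero, pow_zero, mul_one]
      field_simp
      try ring
    · intro j
      have : Klp p (2 * j + 2) 0 m = p ^ (2 * j + 1) * (p - r) := by
        rw [Klp_zero_right p (2 * j + 1), Finset.sum_congr rfl fun x _ => k_even p _ j,
          Finset.sum_sub_distrib, hr, kN_one]
        simp [ZMod.card]
      simp only [kT, this]
      push_cast
      rw [inv_pow]
      simp only [mul_zero, pow_zero, mul_one]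
      field_simp
      try ring
  -- the rows `v ≥ 1`
  obtain ⟨g, g0, g1, g2⟩ : ∃ g : ℕ → ℂ, g 0 = 1 ∧ (∀ j, g (2 * j + 1) = 0 * X ^ (2 * j + 1)) ∧
      (∀ j, g (2 * j + 2) = (1 - (p:ℂ)⁻¹) * X ^ (2 * j + 2)) := by
    refine ⟨fun u => if u = 0 then 1 else if Odd u then 0 else (1 - (p:ℂ)⁻¹) * X ^ u,
      by simp, fun j => by simp, fun j => ?_⟩
    have : ¬ Odd (2 * j + 2) := by rw [Nat.not_odd_iff_even]; exact ⟨j + 1, by ring⟩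
    simp [this]
  have hg : HasSum g (1 + (0 * X + (1 - (p:ℂ)⁻¹) * X ^ 2) * (1 - X ^ 2)⁻¹) := by
    exact k_hs X _ _ hX g g0 g1 g2
  have hh : HasSum (fun v : ℕ => (r * (X ^ 2 * (p:ℂ)⁻¹)) * (X ^ 2 * (p:ℂ)⁻¹) ^ v)
      ((r * (X ^ 2 * (p:ℂ)⁻¹)) * (1 - X ^ 2 * (p:ℂ)⁻¹)⁻¹) :=
    (hasSum_geometric_of_norm_lt_one hY).mul_left _
  have hB := k_mul _ _ _ _ hg hh
  have hB' : HasSum (fun x : ℕ × ℕ => kT p X m (x.1, x.2 + 1))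
      ((1 + (0 * X + (1 - (p:ℂ)⁻¹) * X ^ 2) * (1 - X ^ 2)⁻¹) *
        ((r * (X ^ 2 * (p:ℂ)⁻¹)) * (1 - X ^ 2 * (p:ℂ)⁻¹)⁻¹)) := by
    refine k_congr hB (fun x => ?_) rfl
    obtain ⟨u, v⟩ := x
    rcases Nat.eq_zero_or_pos u with h0 | h0
    · subst h0
      have : Klp p 0 (v + 1) m = r := by
        rw [Klp_zero_left, show 2 * (v + 1) = (2 * v + 1) + 1 by ring, kN_eq p hp2 m hm, hr]
      simp only [kT, this, g0]
      ring
    · rcases Nat.even_or_odd' u with ⟨j, hj | hj⟩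
      · obtain ⟨i, rfl⟩ : ∃ i, j = i + 1 := ⟨j - 1, by omega⟩
        obtain rfl : u = 2 * i + 2 := by omega
        have : Klp p (2 * i + 2) (v + 1) m = r * (p ^ (2 * i + 1) * (p - 1)) := by
          rw [Klp_unit p (2 * i + 1) (v + 1) hp2 m hm (by simp),
            Finset.sum_congr rfl fun x _ => k_even p _ i]
          simp [ZMod.card, hr]
        simp only [kT, this, g2]
        push_cast
        simp only [inv_pow, mul_pow]
        field_simp
        ring
      · subst hj
        have : Klp p (2 * j + 1) (v + 1) m = 0 := by
          rw [Klp_unit p (2 * j) (v + 1) hp2 m hm (by simp),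
            Finset.sum_congr rfl fun x _ => k_odd p _ j, quadraticChar_sum_zero (k_char p hp2)]
          simp
        simp [kT, this, g1]
  convert k_split _ _ _ hA hB' using 1
  have h1 := hne _ hX2
  have h2 := hne _ hY
  have h3 : (p:ℂ) - X ^ 2 ≠ 0 := by
    intro h; apply h2; field_simp; simpa using h
  field_simp
  ring

lemma k_main (p : ℕ) [Fact p.Prime] (hp2 : p ≠ 2) (X : ℂ) (hX : ‖X‖ < 1) (n : ℤ)
    (hn : ¬ (p:ℤ) ∣ n) (k : ℕ) :
    HasSum (kT p X (p ^ k * n))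
      ((1 - X * (p:ℂ)⁻¹) * (1 - X ^ 2)⁻¹ * ((1 - X ^ (k + 1)) * (1 - X)⁻¹)) := by
  have hp : (p:ℂ) ≠ 0 := by exact_mod_cast (Fact.out : p.Prime).ne_zero
  have hX2 : ‖X ^ 2‖ < 1 := by rw [norm_pow]; exact pow_lt_one₀ (norm_nonneg _) hX two_ne_zero
  have hne : ∀ Y : ℂ, ‖Y‖ < 1 → 1 - Y ≠ 0 := by
    intro Y hY h
    rw [← sub_eq_zero.1 h] at hY; simp at hY
  have h1 := hne _ hX
  have h2 := hne _ hX2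
  induction k using Nat.twoStepInduction with
  | zero =>
    convert k_base0 p hp2 X hX n hn using 1
    · simp
    · field_simp
      ring
  | one =>
    rw [pow_one]
    convert k_split _ _ 0 (k_row_dvd p X hX (p * n) (dvd_mul_right _ _)) ?_ using 1
    · field_simp
      ring
    · refine k_congr hasSum_zero (fun x => ?_) rfl
      simp [kT, Klp_one p _ _ hp2 n hn]
  | more k ih _ =>
    have hB : HasSum (fun x : ℕ × ℕ => kT p X (p ^ (k + 2) * n) (x.1, x.2 + 1))
      (X ^ 2 * ((1 - X * (p:ℂ)⁻¹) * (1 - X ^ 2)⁻¹ * ((1 - X ^ (k + 1)) * (1 - X)⁻¹))) := by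
      refine k_congr (ih.mul_left (X ^ 2)) (fun x => ?_) rfl
      have : (p:ℤ) ^ (k + 2) * n = p ^ 2 * (p ^ k * n) := by ring
      simp only [kT, this, Klp_rec]
      push_cast
      simp only [inv_pow]
      field_simp
      ring
    convert k_split _ _ _ (k_row_dvd p X hX (p ^ (k+2) * n)
      (Dvd.dvd.mul_right (dvd_pow_self _ (by simp)) _)) hB using 1
    field_simp
    ring

theorem stmt5 (p : ℕ) (hp : p.Prime) (hp2 : p ≠ 2) (m : ℤ) (hm : m ≠ 0)
    (hpm : (p:ℤ) ∣ m) (s : ℂ) (hs : 0 < s.re) :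
    Summable (fun uv : ℕ × ℕ =>
      ‖(Klp p uv.1 uv.2 m : ℂ) * (p:ℂ) ^ (-(uv.1:ℂ) * (s+1)) * (p:ℂ) ^ (-(uv.2:ℂ) * (2*s+1))‖) ∧
    ∑' uv : ℕ × ℕ,
        (Klp p uv.1 uv.2 m : ℂ) * (p:ℂ) ^ (-(uv.1:ℂ) * (s+1)) * (p:ℂ) ^ (-(uv.2:ℂ) * (2*s+1))
      = (1 - (p:ℂ) ^ (-(s+1))) / (1 - (p:ℂ) ^ (-(2*s)))
        * ((1 - (p:ℂ) ^ (-s * ((padicValInt p m : ℂ) + 1))) / (1 - (p:ℂ) ^ (-s))) := by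
  haveI : Fact p.Prime := ⟨hp⟩
  have hp0 : (p:ℂ) ≠ 0 := by exact_mod_cast hp.ne_zero
  have hX : ‖(p:ℂ) ^ (-s)‖ < 1 := by
    rw [Complex.norm_natCast_cpow_of_pos hp.pos]
    apply Real.rpow_lt_one_of_one_lt_of_neg
    · exact_mod_cast hp.one_lt
    · simpa using hs
  obtain ⟨n, hn, hmn⟩ : ∃ n : ℤ, ¬ (p:ℤ) ∣ n ∧ m = p ^ (padicValInt p m) * n := by
    obtain ⟨n, hn⟩ : (p:ℤ) ^ (padicValInt p m) ∣ m := by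
      rw [padicValInt_dvd_iff]; right; exact le_rfl
    refine ⟨n, fun ⟨c, hc⟩ => ?_, hn⟩
    have : (p:ℤ) ^ (padicValInt p m + 1) ∣ m := ⟨c, by rw [pow_succ, mul_assoc, ← hc]; exact hn⟩
    rw [padicValInt_dvd_iff] at this
    rcases this with h | h
    · exact hm h
    · omega
  have hmain := k_main p hp2 _ hX n hn (padicValInt p m)
  rw [← hmn] at hmain
  have hpow : ∀ a : ℕ, ((p:ℂ) ^ (-s)) ^ a = (p:ℂ) ^ (-(a * s)) := by
    intro a; rw [← Complex.cpow_nat_mul]; congr 1; ring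
  have hinv : ∀ a : ℕ, ((p:ℂ)⁻¹) ^ a = (p:ℂ) ^ (-(a:ℂ)) := by
    intro a; rw [Complex.cpow_neg, Complex.cpow_natCast, inv_pow]
  have hterm : (fun uv : ℕ × ℕ => (Klp p uv.1 uv.2 m : ℂ) * (p:ℂ) ^ (-(uv.1:ℂ) * (s+1))
      * (p:ℂ) ^ (-(uv.2:ℂ) * (2*s+1))) = kT p ((p:ℂ) ^ (-s)) m := by
    funext x
    simp only [kT, hpow, hinv]
    rw [← Complex.cpow_add _ _ hp0, ← Complex.cpow_add _ _ hp0]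
    push_cast
    congr 2
    · congr 2; ring
    · ring
  constructor
  · have := hmain.summable.norm
    rw [← hterm] at this
    exact this
  · rw [hterm, hmain.tsum_eq, hpow, hpow, ← pow_one ((p:ℂ)⁻¹), hinv, ← Complex.cpow_add _ _ hp0]
    rw [div_eq_mul_inv, div_eq_mul_inv]
    push_cast
    congr 4
    · congr 1; ring
    · congr 2; ring
end

section
/- Let ϑ > 0, let Φ : (0, ∞) → ℝ be a smooth function all of whose derivatives have rapid decay (for every a ∈ ℕ and every A > 0 there is a constant C with |Φ^{(a)}(x)| ≤ C·x^{−A} for all x ≥ 1), and let g₁, g₂ : ℝ → ℝ be smooth functions. Then the function h : ℝ → ℝ defined by h(x) = (2|x² − 1|^{1/2}·g₁(x) + g₂(x))·Φ(|x² − 1|^{−ϑ}) for x ≠ ±1 and h(1) = h(−1) = 0 is smooth on all of ℝ. -/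
/-- Auxiliary family, stable under differentiation. -/
noncomputable def auxK (ϑ : ℝ) (Ψ : ℕ → ℝ → ℝ) (a : ℕ) (s : ℝ) (g : ℝ → ℝ) (x : ℝ) : ℝ :=
  if x^2 - 1 = 0 then 0 else g x * |x^2 - 1| ^ s * Ψ a (|x^2 - 1| ^ (-ϑ))

lemma abs_rpow_hasDerivAt (s x : ℝ) (hx : x^2 - 1 ≠ 0) :
    HasDerivAt (fun y : ℝ => |y^2 - 1| ^ s)
      (s * (|x^2 - 1| ^ (s - 2) * ((x^2-1) * (2 * x)))) x := by
  have h0 : HasDerivAt (fun y : ℝ => y^2 - 1) (2 * x) x := by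
    simpa using (hasDerivAt_pow 2 x).sub_const 1
  have hp : 0 < |x^2 - 1| := abs_pos.mpr hx
  have h1 : HasDerivAt (fun y : ℝ => |y^2 - 1|) (SignType.sign (x^2-1) * (2 * x)) x :=
    HasDerivAt.comp (h₂ := fun z : ℝ => |z|) x (hasDerivAt_abs hx) h0
  have h2 := h1.rpow_const (p := s) (Or.inl hp.ne')
  refine h2.congr_deriv ?_
  have e : |x^2 - 1| ^ (s - 1) = |x^2 - 1| ^ (s - 2) * |x^2 - 1| := by
    rw [← Real.rpow_add_one hp.ne']; congr 1; ring
  rw [e]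
  have : (SignType.sign (x^2-1) : ℝ) * |x^2-1| = x^2-1 := by
    exact sign_mul_abs _
  linear_combination (s * |x^2 - 1| ^ (s - 2) * (2*x)) * this

lemma auxK_zero_deriv (ϑ : ℝ) (hϑ : 0 < ϑ) (Ψ : ℕ → ℝ → ℝ)
    (hdecay : ∀ a : ℕ, ∀ A : ℝ, 0 < A → ∃ C : ℝ, ∀ x : ℝ, 1 ≤ x → |Ψ a x| ≤ C * x ^ (-A))
    (a : ℕ) (s : ℝ) (g : ℝ → ℝ) (hg : Continuous g) (x : ℝ) (hx : x^2 - 1 = 0) :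
    HasDerivAt (auxK ϑ Ψ a s g) 0 x := by
  obtain ⟨C, hC⟩ := hdecay a ((|s| + 2) / ϑ) (by positivity)
  have hbig : auxK ϑ Ψ a s g =O[nhds x] (fun y => ‖y - x‖ ^ 2) := by
    have hb : (fun y => g y * (C * (y + x)^2)) =O[nhds x] (fun _ => (1:ℝ)) :=
      Filter.Tendsto.isBigO_one ℝ
        ((by fun_prop : Continuous fun y => g y * (C * (y + x)^2)).tendsto x)
    have hb2 : (fun y => g y * (C * (y + x)^2) * (y - x)^2) =O[nhds x] (fun y => ‖y - x‖ ^ 2) := by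
      simpa using hb.mul (Asymptotics.isBigO_refl (fun y => (y - x)^2) (nhds x))
    refine Asymptotics.IsBigO.trans ?_ hb2
    refine Asymptotics.IsBigO.of_bound 1 ?_
    have hcont : Filter.Tendsto (fun y : ℝ => |y^2 - 1|) (nhds x) (nhds 0) := by
      have : ContinuousAt (fun y : ℝ => |y^2 - 1|) x := by fun_prop
      simpa [ContinuousAt, hx] using this
    filter_upwards [hcont.eventually (gt_mem_nhds one_pos)] with y hy
    unfold auxK
    split_ifs with h0
    · rw [norm_zero]; positivity
    · have hp : 0 < |y^2 - 1| := abs_pos.mpr h0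
      have h1 : 1 ≤ |y^2 - 1| ^ (-ϑ) :=
        Real.one_le_rpow_of_pos_of_le_one_of_nonpos hp hy.le (by linarith)
      have h2 := hC _ h1
      rw [← Real.rpow_mul hp.le] at h2
      have e : -ϑ * -((|s| + 2) / ϑ) = |s| + 2 := by field_simp
      rw [e] at h2
      have hCn : 0 ≤ C := by
        have : 0 ≤ C * |y^2-1| ^ (|s| + 2) := (abs_nonneg _).trans h2
        exact nonneg_of_mul_nonneg_left this (Real.rpow_pos_of_pos hp _)
      have h3 : |y^2-1| ^ s * |y^2-1| ^ (|s| + 2) ≤ |y^2-1| ^ (2:ℕ) := by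
        rw [← Real.rpow_add hp, ← Real.rpow_natCast |y^2-1| 2]
        apply Real.rpow_le_rpow_of_exponent_ge hp hy.le
        have := neg_abs_le s
        push_cast; linarith
      have h4 : (y + x)^2 * (y-x)^2 = |y^2-1|^2 := by
        rw [sq_abs, ← mul_pow]
        congr 1
        linear_combination -hx
      have hr : 0 ≤ |y^2-1| ^ s := (Real.rpow_pos_of_pos hp _).le
      rw [one_mul, mul_assoc (g y), mul_assoc (g y), norm_mul (g y), norm_mul (g y)]
      refine mul_le_mul_of_nonneg_left ?_ (norm_nonneg _)
      rw [mul_assoc, h4, Real.norm_eq_abs, Real.norm_eq_abs, abs_mul, abs_of_nonneg hr,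
        abs_of_nonneg (by positivity : 0 ≤ C * |y^2-1|^2)]
      calc |y^2-1| ^ s * |Ψ a (|y^2-1| ^ (-ϑ))|
          ≤ |y^2-1| ^ s * (C * |y^2-1| ^ (|s| + 2)) := mul_le_mul_of_nonneg_left h2 hr
        _ = C * (|y^2-1| ^ s * |y^2-1| ^ (|s| + 2)) := by ring
        _ ≤ _ := mul_le_mul_of_nonneg_left h3 hCn
  have := (hbig.hasFDerivAt (𝕜 := ℝ) one_lt_two).hasDerivAt
  simpa using this

lemma auxK_hasDerivAt (ϑ : ℝ) (hϑ : 0 < ϑ) (Ψ : ℕ → ℝ → ℝ)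
    (hΨ : ∀ a t, 0 < t → HasDerivAt (Ψ a) (Ψ (a+1) t) t)
    (hdecay : ∀ a : ℕ, ∀ A : ℝ, 0 < A → ∃ C : ℝ, ∀ x : ℝ, 1 ≤ x → |Ψ a x| ≤ C * x ^ (-A))
    (a : ℕ) (s : ℝ) (g : ℝ → ℝ) (hg : ContDiff ℝ (⊤ : ℕ∞) g) (x : ℝ) :
    HasDerivAt (auxK ϑ Ψ a s g) (auxK ϑ Ψ a s (deriv g) x
      + auxK ϑ Ψ a (s - 2) (fun y => s * (g y * ((y^2-1) * (2*y)))) x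
      + auxK ϑ Ψ (a+1) (s + (-ϑ - 2)) (fun y => -ϑ * (g y * ((y^2-1) * (2*y)))) x) x := by
  by_cases hx : x^2 - 1 = 0
  · have := auxK_zero_deriv ϑ hϑ Ψ hdecay a s g hg.continuous x hx
    simpa [auxK, hx] using this
  · have hp : 0 < |x^2 - 1| := abs_pos.mpr hx
    have hgd : HasDerivAt g (deriv g x) x :=
      (hg.differentiable (by simp) x).hasDerivAt
    have hc := (hΨ a _ (Real.rpow_pos_of_pos hp (-ϑ))).comp x (abs_rpow_hasDerivAt (-ϑ) x hx)
    have hm := (hgd.mul (abs_rpow_hasDerivAt s x hx)).mul hc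
    have hev : auxK ϑ Ψ a s g =ᶠ[nhds x]
        fun y => g y * |y^2 - 1| ^ s * Ψ a (|y^2 - 1| ^ (-ϑ)) := by
      have : ContinuousAt (fun y : ℝ => y^2 - 1) x := by fun_prop
      filter_upwards [this.eventually_ne hx] with y hy
      simp [auxK, hy]
    refine (HasDerivAt.congr_of_eventuallyEq hm hev).congr_deriv ?_
    simp only [auxK, hx, if_false, Function.comp, Pi.mul_apply]
    rw [Real.rpow_add hp s]
    ring

lemma auxK_contDiff (ϑ : ℝ) (hϑ : 0 < ϑ) (Ψ : ℕ → ℝ → ℝ)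
    (hΨ : ∀ a t, 0 < t → HasDerivAt (Ψ a) (Ψ (a+1) t) t)
    (hdecay : ∀ a : ℕ, ∀ A : ℝ, 0 < A → ∃ C : ℝ, ∀ x : ℝ, 1 ≤ x → |Ψ a x| ≤ C * x ^ (-A))
    (n : ℕ) : ∀ (a : ℕ) (s : ℝ) (g : ℝ → ℝ), ContDiff ℝ (⊤ : ℕ∞) g →
      ContDiff ℝ n (auxK ϑ Ψ a s g) := by
  induction n with
  | zero =>
    intro a s g hg
    rw [Nat.cast_zero, contDiff_zero]
    exact continuous_iff_continuousAt.mpr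
      fun x => (auxK_hasDerivAt ϑ hϑ Ψ hΨ hdecay a s g hg x).continuousAt
  | succ n ih =>
    intro a s g hg
    have hd := auxK_hasDerivAt ϑ hϑ Ψ hΨ hdecay a s g hg
    rw [Nat.cast_succ, contDiff_succ_iff_deriv]
    refine ⟨fun x => (hd x).differentiableAt, fun h => by simp at h, ?_⟩
    rw [funext fun x => (hd x).deriv]
    have hg' : ContDiff ℝ (⊤ : ℕ∞) (deriv g) := (contDiff_infty_iff_deriv.mp hg).2
    exact ((ih _ _ _ hg').add (ih _ _ _ (by fun_prop))).add (ih _ _ _ (by fun_prop))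

/-- If `Φ` is smooth on `(0,∞)` with all derivatives of rapid decay and `g₁, g₂` are smooth,
then `h(x) = (2|x²−1|^{1/2} g₁(x) + g₂(x))·Φ(|x²−1|^{−ϑ})` (extended by `0` at `x = ±1`)
is smooth on all of `ℝ`. -/
theorem stmt19 (ϑ : ℝ) (hϑ : 0 < ϑ) (Φ : ℝ → ℝ)
    (hΦ : ContDiffOn ℝ (⊤ : ℕ∞) Φ (Set.Ioi 0))
    (hdecay : ∀ a : ℕ, ∀ A : ℝ, 0 < A → ∃ C : ℝ, ∀ x : ℝ, 1 ≤ x →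
      |iteratedDerivWithin a Φ (Set.Ioi 0) x| ≤ C * x ^ (-A))
    (g₁ g₂ : ℝ → ℝ) (hg₁ : ContDiff ℝ (⊤ : ℕ∞) g₁) (hg₂ : ContDiff ℝ (⊤ : ℕ∞) g₂)
    (h : ℝ → ℝ)
    (hh : ∀ x : ℝ, x ≠ 1 → x ≠ -1 →
      h x = (2 * |x^2 - 1| ^ ((1:ℝ)/2) * g₁ x + g₂ x) * Φ (|x^2 - 1| ^ (-ϑ)))
    (h1 : h 1 = 0) (hm1 : h (-1) = 0) :
    ContDiff ℝ (⊤ : ℕ∞) h := by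
  set Ψ : ℕ → ℝ → ℝ := fun a => iteratedDerivWithin a Φ (Set.Ioi 0) with hΨdef
  have hΨ : ∀ a t, 0 < t → HasDerivAt (Ψ a) (Ψ (a+1) t) t := by
    intro a t ht
    have hd : DifferentiableOn ℝ (Ψ a) (Set.Ioi 0) :=
      hΦ.differentiableOn_iteratedDerivWithin (by exact_mod_cast WithTop.coe_lt_top a)
        (uniqueDiffOn_Ioi 0)
    have hn : Set.Ioi (0:ℝ) ∈ nhds t := Ioi_mem_nhds ht
    have := (hd t ht).hasDerivWithinAt.hasDerivAt hn
    refine this.congr_deriv ?_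
    simp only [hΨdef]
    rw [iteratedDerivWithin_succ]
  have key : h = fun x => auxK ϑ Ψ 0 (1/2) (fun x => 2 * g₁ x) x + auxK ϑ Ψ 0 0 g₂ x := by
    funext x
    unfold auxK
    by_cases hx : x^2 - 1 = 0
    · have : x = 1 ∨ x = -1 := by have h5 : (x-1)*(x+1) = 0 := by { linear_combination hx }
                                  rcases mul_eq_zero.mp h5 with h6 | h6
                                  · left; linarith
                                  · right; linarith
      rcases this with rfl | rfl <;> simp [h1, hm1]
    · have hx1 : x ≠ 1 := by rintro rfl; norm_num at hx
      have hx2 : x ≠ -1 := by rintro rfl; norm_num at hx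
      rw [hh x hx1 hx2]
      simp only [hx, if_false, hΨdef, iteratedDerivWithin_zero, Real.rpow_zero]
      ring
  rw [key, contDiff_infty]
  intro n
  exact (auxK_contDiff ϑ hϑ Ψ hΨ hdecay n _ _ _ (by fun_prop)).add
    (auxK_contDiff ϑ hϑ Ψ hΨ hdecay n _ _ _ hg₂)
end
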